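/- Let c : ℝ → ℂ be the cardioid parametrization c(θ) = (1 − cos θ)·exp(iθ). Then the three-point ratio blows up at rate 1/θ: precisely, the function θ ↦ θ · ‖c(θ)‖ / ‖c(θ) − c(−θ)‖ tends to 1/2 as θ → 0 from the right (along the filter 𝓝[>] 0). -/

import Mathlib

open Filter Complex Topology

/-- The cardioid parametrization `c(θ) = (1 - cos θ)·exp(iθ)`. -/
noncomputable def cardioid (θ : ℝ) : ℂ :=
  (1 - Real.cos θ : ℝ) * Complex.exp (θ * Complex.I)

/-!
The points at angles `θ` and `-θ` of a polar curve `r(θ)·exp(iθ)` with even radius are `r(θ)` times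
a pair of conjugate unit vectors, so their distance is `2·|r(θ)|·|sin θ|`. The radius cancels from
the ratio, which leaves the limit of `θ / (2·|sin θ|)`.
-/

theorem norm_exp_mul_I_sub_exp_neg_mul_I (θ : ℝ) :
    ‖exp (θ * I) - exp (-θ * I)‖ = 2 * |Real.sin θ| := by
  have h : exp (θ * I) - exp (-θ * I) = (2 * Real.sin θ : ℝ) * I := by
    rw [exp_mul_I, exp_mul_I, cos_neg, sin_neg]
    push_cast
    ring
  rw [h, norm_mul, norm_I, mul_one, norm_real, Real.norm_eq_abs, abs_mul, abs_two]

theorem norm_mul_exp_div_norm_sub {z : ℂ} (hz : z ≠ 0) (θ : ℝ) :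
    ‖z * exp (θ * I)‖ / ‖z * exp (θ * I) - z * exp (-θ * I)‖ = (2 * |Real.sin θ|)⁻¹ := by
  rw [← mul_sub, norm_mul, norm_mul, norm_exp_ofReal_mul_I, norm_exp_mul_I_sub_exp_neg_mul_I,
    mul_div_mul_left _ _ (norm_ne_zero_iff.mpr hz), one_div]

theorem tendsto_div_two_mul_abs_sin :
    Tendsto (fun θ : ℝ => θ / (2 * |Real.sin θ|)) (𝓝[>] 0) (𝓝 (1 / 2)) := by
  have hsinc : Tendsto (fun θ => (2 * |Real.sinc θ|)⁻¹) (𝓝 0) (𝓝 (1 / 2)) := by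
    have hcont : ContinuousAt (fun θ => (2 * |Real.sinc θ|)⁻¹) 0 :=
      (continuous_const.mul Real.continuous_sinc.abs).continuousAt.inv₀ (by simp)
    simpa [ContinuousAt] using hcont
  refine (hsinc.mono_left nhdsWithin_le_nhds).congr' ?_
  filter_upwards [self_mem_nhdsWithin] with θ (hθ : 0 < θ)
  rw [Real.sinc_of_ne_zero hθ.ne', abs_div, abs_of_pos hθ, ← mul_div_assoc, inv_div]

theorem cardioid_ratio_rate_general {r : ℝ → ℂ} (heven : r.Even) (hne : ∀ᶠ θ in 𝓝[>] 0, r θ ≠ 0)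
    {c : ℝ → ℂ} (hc : ∀ θ, c θ = r θ * exp (θ * I)) :
    Tendsto (fun θ : ℝ => θ * ‖c θ‖ / ‖c θ - c (-θ)‖) (𝓝[>] 0) (𝓝 (1 / 2)) := by
  refine tendsto_div_two_mul_abs_sin.congr' ?_
  filter_upwards [hne] with θ hθ
  rw [hc, hc, heven, ofReal_neg, mul_div_assoc, norm_mul_exp_div_norm_sub hθ,
    div_eq_mul_inv]

theorem eventually_one_sub_cos_ne_zero : ∀ᶠ θ : ℝ in 𝓝[>] 0, 1 - Real.cos θ ≠ 0 := by
  filter_upwards [Ioo_mem_nhdsGT Real.two_pi_pos] with θ ⟨hpos, hlt⟩ hcos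
  have hzero : θ = 0 :=
    (Real.cos_eq_one_iff_of_lt_of_lt (by linarith) hlt).mp (sub_eq_zero.mp hcos).symm
  exact hpos.ne' hzero

/-- The three-point ratio for the cardioid blows up at rate `1/θ`:
`θ · ‖c(θ)‖ / ‖c(θ) - c(-θ)‖ → 1/2` as `θ → 0⁺`. -/
theorem cardioid_ratio_rate :
    Tendsto (fun θ : ℝ => θ * ‖cardioid θ‖ / ‖cardioid θ - cardioid (-θ)‖)
      (𝓝[>] 0) (𝓝 (1 / 2)) :=
  cardioid_ratio_rate_general (r := fun θ => (1 - Real.cos θ : ℝ)) (fun θ => by simp)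
    (eventually_one_sub_cos_ne_zero.mono fun _ => ofReal_ne_zero.mpr) fun _ => rfl
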